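/- For every integer n ≥ 5 one has vrad(NN_Q~) ≥ 1/(√2 · n). -/

import Mathlib

open MeasureTheory Finset

noncomputable section

/-- The space `Q` of even quartics, represented by symmetric coefficient matrices
`a : Fin n → Fin n → ℝ` (the quartic being `∑ i j, a i j * x i ^ 2 * x j ^ 2`). -/
def symSub (n : ℕ) : Submodule ℝ (Fin n → Fin n → ℝ) where
  carrier := {a | ∀ i j, a i j = a j i}
  add_mem' := by
    intro a b ha hb i j
    simp only [Pi.add_apply, ha i j, hb i j]
  zero_mem' := by intro i j; rfl
  smul_mem' := by
    intro c a ha i j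
    simp only [Pi.smul_apply, smul_eq_mul, ha i j]

/-- The even quartic form corresponding to a symmetric coefficient matrix. -/
def qfun {n : ℕ} (a : symSub n) (x : EuclideanSpace ℝ (Fin n)) : ℝ :=
  ∑ i, ∑ j, a.1 i j * (x i)^2 * (x j)^2

/-- The element of `Q` corresponding to `r(x) = (x_1^2 + ... + x_n^2)^2`. -/
def rQ (n : ℕ) : symSub n := ⟨fun _ _ => 1, fun _ _ => rfl⟩

/-- The section `K~ = {f ∈ M : f + r ∈ K}` of a cone `K ⊆ Q`. -/
def sect {n : ℕ} (σ : Measure (EuclideanSpace ℝ (Fin n))) (K : Set (symSub n)) :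
    Set (symSub n) :=
  {a | (∫ x, qfun a x ∂σ) = 0 ∧ a + rQ n ∈ K}

/-- The volume radius of a subset of `M`, computed through a linear isometry `ψ`
of `ℝ^(dim M)` (with Lebesgue measure) onto `M`. -/
def vrad {n d : ℕ} (ψ : EuclideanSpace ℝ (Fin d) →ₗ[ℝ] symSub n)
    (C : Set (symSub n)) : ℝ :=
  ((volume (⇑ψ ⁻¹' C)).toReal /
    (volume (Metric.closedBall (0 : EuclideanSpace ℝ (Fin d)) 1)).toReal) ^ ((1:ℝ)/(d:ℝ))

/-- `NN_Q`: even quartics with nonnegative coefficients. -/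
def NNQ (n : ℕ) : Set (symSub n) :=
  {a | ∀ i j, 0 ≤ a.1 i j}


lemma abs_det_le_one {m : ℕ} (L : (Fin m → ℝ) →ₗ[ℝ] (Fin m → ℝ))
    (hc : ∀ v, ∑ k, (L v k)^2 ≤ ∑ k, (v k)^2) : |LinearMap.det L| ≤ 1 := by
  let B : Set (Fin m → ℝ) := {v | ∑ k, (v k)^2 ≤ 1}
  have hsub : L '' B ⊆ B := by
    rintro _ ⟨v, hv, rfl⟩
    exact (hc v).trans hv
  have h1 := Measure.addHaar_image_linearMap volume L B
  have h2 : volume (L '' B) ≤ volume B := measure_mono hsub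
  have hB0 : volume B ≠ 0 := by
    have ho : IsOpen {v : Fin m → ℝ | ∑ k, (v k)^2 < 1} :=
      isOpen_lt (by fun_prop) continuous_const
    have hpos := ho.measure_pos volume ⟨0, by simp⟩
    exact (hpos.trans_le (measure_mono (fun v (hv : ∑ k, (v k)^2 < 1) => (le_of_lt hv : ∑ k, (v k)^2 ≤ 1)))).ne'
  have hBt : volume B ≠ ⊤ := by
    have : B ⊆ Metric.closedBall 0 1 := by
      intro v hv
      rw [mem_closedBall_zero_iff, pi_norm_le_iff_of_nonneg zero_le_one]
      intro k
      rw [Real.norm_eq_abs, ← sq_le_one_iff_abs_le_one]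
      exact (single_le_sum (f := fun k => (v k)^2) (fun i _ => sq_nonneg _) (mem_univ k)).trans hv
    exact ((measure_mono this).trans_lt measure_closedBall_lt_top).ne
  rw [h1] at h2
  have h3 : ENNReal.ofReal |LinearMap.det L| ≤ 1 := by
    by_contra h
    push Not at h
    have := ENNReal.mul_lt_mul_left hB0 hBt h
    rw [one_mul] at this
    exact absurd h2 (not_le.mpr this)
  simpa using h3

lemma lint_exp {m : ℕ} (w : Fin m → ℝ) (hw : ∀ k, 0 < w k) :
    ∫⁻ s : Fin m → ℝ, ENNReal.ofReal (∏ k, (Set.Ioi (0:ℝ)).indicator (fun t => Real.exp (-(w k) * t)) (s k))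
      = ENNReal.ofReal (∏ k, (w k)⁻¹) := by
  have hi : ∀ k, Integrable ((Set.Ioi (0:ℝ)).indicator (fun t => Real.exp (-(w k) * t))) := by
    intro k
    rw [integrable_indicator_iff measurableSet_Ioi]
    exact integrableOn_exp_mul_Ioi (by linarith [hw k]) 0
  rw [← ofReal_integral_eq_lintegral_ofReal]
  · rw [integral_fintype_prod_volume_eq_prod]
    congr 1
    refine prod_congr rfl fun k _ => ?_
    rw [integral_indicator measurableSet_Ioi, integral_exp_mul_Ioi (by linarith [hw k])]
    simp [neg_div, div_neg]
  · exact Integrable.fintype_prod hi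
  · refine Filter.Eventually.of_forall fun s => prod_nonneg fun k _ => ?_
    exact Set.indicator_nonneg (fun _ _ => (Real.exp_pos _).le) _

lemma lint_gamma (d : ℕ) :
    ∫⁻ t in Set.Ioi (0:ℝ), ENNReal.ofReal (Real.exp (-t)) * ENNReal.ofReal (t ^ d) = (d.factorial : ENNReal) := by
  have h := Real.Gamma_eq_integral (s := (d:ℝ)+1) (by positivity)
  have hi := Real.GammaIntegral_convergent (s := (d:ℝ)+1) (by positivity)
  rw [Real.Gamma_nat_eq_factorial, add_sub_cancel_right] at h
  rw [add_sub_cancel_right] at hi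
  have : (d.factorial : ENNReal) = ENNReal.ofReal (d.factorial : ℝ) := by simp
  rw [this, h, ofReal_integral_eq_lintegral_ofReal hi]
  · refine setLIntegral_congr_fun measurableSet_Ioi fun t ht => ?_
    simp only [Real.rpow_natCast]
    rw [ENNReal.ofReal_mul (Real.exp_pos _).le]
  · rw [Filter.EventuallyLE, ae_restrict_iff' measurableSet_Ioi]
    refine Filter.Eventually.of_forall fun t ht => ?_
    have : (0:ℝ) < t := ht
    simp only [Pi.zero_apply]; positivity

open scoped Pointwise in
lemma simplex_vol (d : ℕ) (L : (Fin (d+1) → ℝ) →ₗ[ℝ] (Fin (d+1) → ℝ))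
    (hinj : Function.Injective L)
    (hc : ∀ v, ∑ k, (L v k)^2 ≤ ∑ k, (v k)^2) (w : Fin (d+1) → ℝ) (hw : ∀ k, 0 < w k)
    (hL : ∀ v, ∑ k, w k * L v k = v 0) :
    ∏ k, (w k)⁻¹ ≤ d.factorial * (volume {u : Fin d → ℝ | ∀ k, 0 < L (Fin.cons 1 u) k}).toReal ∧
    volume {u : Fin d → ℝ | ∀ k, 0 < L (Fin.cons 2 u) k} ≠ ⊤ := by
  have hdet : LinearMap.det L ≠ 0 := by
    have := (LinearEquiv.ofInjectiveEndo L hinj).isUnit_det'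
    exact this.ne_zero
  have hd1 := abs_det_le_one L hc
  set S := {u : Fin d → ℝ | ∀ k, 0 < L (Fin.cons 1 u) k} with hS
  have hLc : Continuous L := L.continuous_of_finiteDimensional
  let g : (Fin (d+1) → ℝ) → ENNReal := fun s =>
    ENNReal.ofReal (∏ k, (Set.Ioi (0:ℝ)).indicator (fun t => Real.exp (-(w k) * t)) (s k))
  have hg : Measurable g := by
    refine Measurable.ennreal_ofReal (Finset.measurable_prod _ fun k _ => ?_)
    exact (Measurable.indicator (by fun_prop) measurableSet_Ioi).comp (measurable_pi_apply k)
  have hgL : ∀ v, g (L v) = Set.indicator {v | ∀ k, 0 < L v k} (fun v => ENNReal.ofReal (Real.exp (-(v 0)))) v := by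
    intro v
    by_cases hv : ∀ k, 0 < L v k
    · rw [Set.indicator_of_mem (show v ∈ {v | ∀ k, 0 < L v k} from hv)]
      simp only [g]
      congr 1
      rw [← hL v, ← sum_neg_distrib, Real.exp_sum]
      refine prod_congr rfl fun k _ => ?_
      rw [Set.indicator_of_mem (show L v k ∈ Set.Ioi (0:ℝ) from hv k), neg_mul]
    · rw [Set.indicator_of_notMem (show v ∉ {v | ∀ k, 0 < L v k} from hv)]
      push Not at hv
      obtain ⟨k, hk⟩ := hv
      simp only [g]
      rw [prod_eq_zero (mem_univ k), ENNReal.ofReal_zero]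
      exact Set.indicator_of_notMem (by simpa using hk) _
  have e1 : ∫⁻ v, g (L v) = ENNReal.ofReal |(LinearMap.det L)⁻¹| * ENNReal.ofReal (∏ k, (w k)⁻¹) := by
    rw [← lintegral_map hg hLc.measurable, Measure.map_linearMap_addHaar_eq_smul_addHaar _ hdet,
      lintegral_smul_measure, smul_eq_mul, lint_exp w hw]
  have hslice : ∀ t : ℝ, 0 < t → {u : Fin d → ℝ | ∀ k, 0 < L (Fin.cons t u) k} = t • S := by
    intro t ht
    ext u
    rw [Set.mem_smul_set_iff_inv_smul_mem₀ ht.ne']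
    have : (Fin.cons 1 (t⁻¹ • u) : Fin (d+1) → ℝ) = t⁻¹ • (Fin.cons t u : Fin (d+1) → ℝ) := by
      ext k
      refine Fin.cases ?_ (fun j => ?_) k
      · simp [ht.ne']
      · simp
    simp only [hS, Set.mem_ofPred_eq, this, map_smul, Pi.smul_apply, smul_eq_mul]
    refine forall_congr' fun k => ?_
    exact (mul_pos_iff_of_pos_left (inv_pos.mpr ht)).symm
  have e2 : ∫⁻ v, g (L v) = d.factorial * volume S := by
    have hmp := (volume_preserving_piFinSuccAbove (fun _ : Fin (d+1) => ℝ) 0).symm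
    have hgm : Measurable fun v => g (L v) := hg.comp hLc.measurable
    rw [← hmp.lintegral_comp hgm, Measure.volume_eq_prod, lintegral_prod _ (by
      exact (hgm.comp hmp.measurable).aemeasurable)]
    have hin : ∀ t : ℝ, ∫⁻ u : Fin d → ℝ, g (L ((MeasurableEquiv.piFinSuccAbove (fun _ : Fin (d+1) => ℝ) 0).symm (t, u)))
        = (Set.Ioi (0:ℝ)).indicator (fun t => ENNReal.ofReal (Real.exp (-t)) * ENNReal.ofReal (t^d) * volume S) t := by
      intro t
      have hcons : ∀ u : Fin d → ℝ, (MeasurableEquiv.piFinSuccAbove (fun _ : Fin (d+1) => ℝ) 0).symm (t, u) = Fin.cons t u := by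
        intro u
        simp [MeasurableEquiv.piFinSuccAbove, Fin.insertNthEquiv]
      simp_rw [hcons, hgL]
      by_cases ht : 0 < t
      · rw [Set.indicator_of_mem (show t ∈ Set.Ioi (0:ℝ) from ht)]
        have : ∀ u : Fin d → ℝ, Set.indicator {v | ∀ k, 0 < L v k} (fun v : Fin (d+1) → ℝ => ENNReal.ofReal (Real.exp (-(v 0)))) (Fin.cons t u)
          = Set.indicator {u : Fin d → ℝ | ∀ k, 0 < L (Fin.cons t u) k} (fun _ => ENNReal.ofReal (Real.exp (-t))) u := by
          intro u
          simp [Set.indicator_apply]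
        simp_rw [this]
        have hm : MeasurableSet {u : Fin d → ℝ | ∀ k, 0 < L (Fin.cons t u) k} := by
          rw [Set.ofPred_forall]
          refine MeasurableSet.iInter fun k => ?_
          refine (isOpen_lt continuous_const ?_).measurableSet
          exact (continuous_apply k).comp (hLc.comp (by fun_prop))
        rw [lintegral_indicator_const hm, hslice t ht, Measure.addHaar_smul]
        simp only [Module.finrank_fintype_fun_eq_card, Fintype.card_fin]
        rw [abs_of_pos (pow_pos ht d), mul_assoc]
      · rw [Set.indicator_of_notMem (show t ∉ Set.Ioi (0:ℝ) from ht)]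
        rw [lintegral_eq_zero_iff' ?_]
        · refine Filter.Eventually.of_forall fun u => ?_
          simp only [Pi.zero_apply]
          refine Set.indicator_of_notMem ?_ _
          intro h
          have h' := hL (Fin.cons t u)
          have : 0 < ∑ k, w k * L (Fin.cons t u) k :=
            sum_pos (fun k _ => mul_pos (hw k) (h k)) univ_nonempty
          rw [h'] at this
          exact ht this
        · refine Measurable.aemeasurable ?_
          simp_rw [← hgL]
          exact hgm.comp (Continuous.measurable (by fun_prop))
    simp_rw [hin]
    rw [lintegral_indicator measurableSet_Ioi, lintegral_mul_const, lint_gamma]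
    fun_prop
  have e3 : (d.factorial : ENNReal) * volume S = ENNReal.ofReal (|(LinearMap.det L)⁻¹| * ∏ k, (w k)⁻¹) := by
    rw [← e2, e1, ENNReal.ofReal_mul (abs_nonneg _)]
  have hP : 0 < ∏ k, (w k)⁻¹ := prod_pos fun k _ => inv_pos.mpr (hw k)
  constructor
  · have e4 := congrArg ENNReal.toReal e3
    rw [ENNReal.toReal_mul, ENNReal.toReal_ofReal (by positivity), ENNReal.toReal_natCast] at e4
    rw [e4]
    refine le_mul_of_one_le_left hP.le ?_
    rw [abs_inv]
    exact (one_le_inv₀ (abs_pos.mpr hdet)).mpr hd1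
  · rw [hslice 2 (by norm_num), Measure.addHaar_smul]
    refine ENNReal.mul_ne_top ENNReal.ofReal_ne_top ?_
    intro h
    rw [h, ENNReal.mul_top (by exact_mod_cast d.factorial_ne_zero)] at e3
    exact ENNReal.ofReal_ne_top e3.symm

section moments
variable {n : ℕ}

/-- orthogonal involution in the `(i,j)` plane -/
def rotL (i j : Fin n) (c s : ℝ) : EuclideanSpace ℝ (Fin n) →ₗ[ℝ] EuclideanSpace ℝ (Fin n) where
  toFun x := WithLp.toLp 2 fun k => if k = i then c * x i + s * x j else if k = j then s * x i - c * x j else x k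
  map_add' x y := by
    ext k; simp only [PiLp.add_apply]; split_ifs <;> ring
  map_smul' a x := by
    ext k; simp only [PiLp.smul_apply, smul_eq_mul, RingHom.id_apply]; split_ifs <;> ring

lemma rotL_i (i j : Fin n) (c s : ℝ) (x) : rotL i j c s x i = c * x i + s * x j := by
  simp [rotL]
lemma rotL_j {i j : Fin n} (h : i ≠ j) (c s : ℝ) (x) : rotL i j c s x j = s * x i - c * x j := by
  simp [rotL, h.symm]
lemma rotL_k {i j k : Fin n} (h : k ≠ i) (h' : k ≠ j) (c s : ℝ) (x) : rotL i j c s x k = x k := by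
  simp [rotL, h, h']

lemma rotL_norm {i j : Fin n} (h : i ≠ j) (c s : ℝ) (hcs : c^2+s^2 = 1) (x) :
    ‖rotL i j c s x‖ = ‖x‖ := by
  rw [EuclideanSpace.norm_eq, EuclideanSpace.norm_eq]
  congr 1
  simp only [Real.norm_eq_abs, sq_abs]
  rw [← Finset.add_sum_erase _ _ (mem_univ i), ← Finset.add_sum_erase _ _ (mem_univ i),
    ← Finset.add_sum_erase _ _ (show j ∈ univ.erase i by simp [h.symm]),
    ← Finset.add_sum_erase (univ.erase i) (fun k => x k ^2) (show j ∈ univ.erase i by simp [h.symm]),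
    rotL_i, rotL_j h]
  have : ∑ k ∈ (univ.erase i).erase j, (rotL i j c s x k)^2 = ∑ k ∈ (univ.erase i).erase j, (x k)^2 := by
    refine sum_congr rfl fun k hk => ?_
    simp only [mem_erase, mem_univ, and_true] at hk
    rw [rotL_k hk.2 hk.1]
  rw [this]
  linear_combination (x i ^2 + x j ^ 2) * hcs

def rotE {i j : Fin n} (h : i ≠ j) (c s : ℝ) (hcs : c^2+s^2 = 1) :
    EuclideanSpace ℝ (Fin n) ≃ₗᵢ[ℝ] EuclideanSpace ℝ (Fin n) :=
  LinearIsometry.toLinearIsometryEquiv ⟨rotL i j c s, rotL_norm h c s hcs⟩ rfl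

lemma rotE_apply {i j : Fin n} (h : i ≠ j) (c s : ℝ) (hcs : c^2+s^2 = 1) (x) :
    rotE h c s hcs x = rotL i j c s x := rfl

lemma sqrt2_inv_pow : ((√2:ℝ)⁻¹)^2 = 1/2 := by
  rw [inv_pow, Real.sq_sqrt (by norm_num)]; norm_num

variable {σ : Measure (EuclideanSpace ℝ (Fin n))}

lemma cont_integrable (hσprob : IsProbabilityMeasure σ)
    (hσsphere : σ (Metric.sphere (0 : EuclideanSpace ℝ (Fin n)) 1) = 1)
    {g : EuclideanSpace ℝ (Fin n) → ℝ} (hg : Continuous g) : Integrable g σ := by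
  have hr : σ.restrict (Metric.sphere (0 : EuclideanSpace ℝ (Fin n)) 1) = σ := by
    refine Measure.restrict_eq_self_of_ae_mem ?_
    exact (prob_compl_eq_zero_iff Metric.isClosed_sphere.measurableSet).mpr hσsphere
  rw [← hr]
  exact hg.continuousOn.integrableOn_compact (isCompact_sphere _ _)

lemma integral_rot
    (hσinv : ∀ O : EuclideanSpace ℝ (Fin n) ≃ₗᵢ[ℝ] EuclideanSpace ℝ (Fin n), Measure.map (⇑O) σ = σ)
    {i j : Fin n} (h : i ≠ j) (c s : ℝ) (hcs : c^2+s^2 = 1)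
    {g : EuclideanSpace ℝ (Fin n) → ℝ} (hg : Continuous g) :
    ∫ x, g (rotL i j c s x) ∂σ = ∫ x, g x ∂σ := by
  conv_rhs => rw [← hσinv (rotE h c s hcs)]
  rw [integral_map (rotE h c s hcs).continuous.aemeasurable hg.aestronglyMeasurable]
  rfl

/-- all that is needed about the measure -/
structure Good (σ : Measure (EuclideanSpace ℝ (Fin n))) : Prop where
  int : ∀ g : EuclideanSpace ℝ (Fin n) → ℝ, Continuous g → Integrable g σ
  swap : ∀ i j, i ≠ j → ∀ g : EuclideanSpace ℝ (Fin n) → ℝ, Continuous g →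
    ∫ x, g (rotL i j 0 1 x) ∂σ = ∫ x, g x ∂σ
  rot : ∀ i j, i ≠ j → ∀ g : EuclideanSpace ℝ (Fin n) → ℝ, Continuous g →
    ∫ x, g (rotL i j (√2)⁻¹ (√2)⁻¹ x) ∂σ = ∫ x, g x ∂σ
  sph : ∀ g : EuclideanSpace ℝ (Fin n) → ℝ, ∫ x, (∑ i, x i ^ 2) * g x ∂σ = ∫ x, g x ∂σ
  one : ∫ x, (1:ℝ) ∂σ = 1

lemma good (hσprob : IsProbabilityMeasure σ)
    (hσsphere : σ (Metric.sphere (0 : EuclideanSpace ℝ (Fin n)) 1) = 1)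
    (hσinv : ∀ O : EuclideanSpace ℝ (Fin n) ≃ₗᵢ[ℝ] EuclideanSpace ℝ (Fin n), Measure.map (⇑O) σ = σ) :
    Good σ where
  int g hg := cont_integrable hσprob hσsphere hg
  swap i j h g hg := integral_rot hσinv h 0 1 (by norm_num) hg
  rot i j h g hg := integral_rot hσinv h _ _ (by
    rw [inv_pow, Real.sq_sqrt (by norm_num)]; norm_num) hg
  sph g := by
    refine integral_congr_ae ?_
    have : ∀ᵐ x ∂σ, x ∈ Metric.sphere (0 : EuclideanSpace ℝ (Fin n)) 1 :=
      (prob_compl_eq_zero_iff Metric.isClosed_sphere.measurableSet).mpr hσsphere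
    filter_upwards [this] with x hx
    have h1 : ‖x‖ ^ 2 = 1 := by rw [mem_sphere_zero_iff_norm.mp hx]; norm_num
    rw [EuclideanSpace.norm_sq_eq] at h1
    simp only [Real.norm_eq_abs, sq_abs] at h1
    rw [h1, one_mul]
  one := by simp


lemma Good.swap4 (G : Good σ) {i j : Fin n} (h : i ≠ j) (g : EuclideanSpace ℝ (Fin n) → ℝ) (hg : Continuous g)
    (hinv : ∀ c s x, g (rotL i j c s x) = g x) (a b : ℕ) :
    ∫ x, g x * (x i ^ a * x j ^ b) ∂σ = ∫ x, g x * (x i ^ b * x j ^ a) ∂σ := by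
  rw [← G.swap i j h _ (by fun_prop)]
  simp only [rotL_i, rotL_j h, hinv]
  congr 1; ext x; ring

lemma Good.R4 (G : Good σ) {i j : Fin n} (h : i ≠ j) (g : EuclideanSpace ℝ (Fin n) → ℝ) (hg : Continuous g)
    (hinv : ∀ c s x, g (rotL i j c s x) = g x) :
    ∫ x, g x * (x i ^ 4 * x j ^ 0) ∂σ = 3 * ∫ x, g x * (x i ^ 2 * x j ^ 2) ∂σ := by
  have h1 := G.rot i j h (fun x => g x * (x i ^ 4 * x j ^ 0) + g x * (x i ^ 0 * x j ^ 4)) (by fun_prop)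
  have h2 := G.swap4 h g hg hinv 4 0
  have h3 : ∀ x, g (rotL i j (√2)⁻¹ (√2)⁻¹ x) * ((rotL i j (√2)⁻¹ (√2)⁻¹ x) i ^ 4 * (rotL i j (√2)⁻¹ (√2)⁻¹ x) j ^ 0)
      + g (rotL i j (√2)⁻¹ (√2)⁻¹ x) * ((rotL i j (√2)⁻¹ (√2)⁻¹ x) i ^ 0 * (rotL i j (√2)⁻¹ (√2)⁻¹ x) j ^ 4)
      = (1/2) * (g x * (x i ^ 4 * x j ^ 0)) + (1/2) * (g x * (x i ^ 0 * x j ^ 4)) + 3 * (g x * (x i ^ 2 * x j ^ 2)) := by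
    intro x
    rw [hinv, rotL_i, rotL_j h]
    have e : ((√2:ℝ)⁻¹)^4 = 1/4 := by
      rw [show ((√2:ℝ)⁻¹)^4 = (((√2:ℝ)⁻¹)^2)^2 by rw [← pow_mul], sqrt2_inv_pow]; norm_num
    linear_combination (g x * (2 * x i ^ 4 + 12 * x i ^2 * x j ^2 + 2 * x j ^4)) * e
  simp only [h3] at h1
  rw [integral_add (G.int _ (by fun_prop)) (G.int _ (by fun_prop)),
    integral_add (G.int _ (by fun_prop)) (G.int _ (by fun_prop)),
    integral_add (G.int _ (by fun_prop)) (G.int _ (by fun_prop)), integral_const_mul, integral_const_mul, integral_const_mul] at h1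
  linarith

lemma Good.R6 (G : Good σ) {i j : Fin n} (h : i ≠ j) (g : EuclideanSpace ℝ (Fin n) → ℝ) (hg : Continuous g)
    (hinv : ∀ c s x, g (rotL i j c s x) = g x) :
    ∫ x, g x * (x i ^ 6 * x j ^ 0) ∂σ = 5 * ∫ x, g x * (x i ^ 4 * x j ^ 2) ∂σ := by
  have h1 := G.rot i j h (fun x => g x * (x i ^ 6 * x j ^ 0) + g x * (x i ^ 0 * x j ^ 6)) (by fun_prop)
  have h2 := G.swap4 h g hg hinv 6 0
  have h2' := G.swap4 h g hg hinv 4 2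
  have h3 : ∀ x, g (rotL i j (√2)⁻¹ (√2)⁻¹ x) * ((rotL i j (√2)⁻¹ (√2)⁻¹ x) i ^ 6 * (rotL i j (√2)⁻¹ (√2)⁻¹ x) j ^ 0)
      + g (rotL i j (√2)⁻¹ (√2)⁻¹ x) * ((rotL i j (√2)⁻¹ (√2)⁻¹ x) i ^ 0 * (rotL i j (√2)⁻¹ (√2)⁻¹ x) j ^ 6)
      = (1/4) * (g x * (x i ^ 6 * x j ^ 0)) + (1/4) * (g x * (x i ^ 0 * x j ^ 6))
        + (15/4) * (g x * (x i ^ 4 * x j ^ 2)) + (15/4) * (g x * (x i ^ 2 * x j ^ 4)) := by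
    intro x
    rw [hinv, rotL_i, rotL_j h]
    have e : ((√2:ℝ)⁻¹)^6 = 1/8 := by
      rw [show ((√2:ℝ)⁻¹)^6 = (((√2:ℝ)⁻¹)^2)^3 by rw [← pow_mul], sqrt2_inv_pow]; norm_num
    linear_combination (g x * (2 * x i ^ 6 + 30 * x i ^4 * x j ^2 + 30 * x i ^2 * x j ^4 + 2 * x j ^6)) * e
  simp only [h3] at h1
  rw [integral_add (G.int _ (by fun_prop)) (G.int _ (by fun_prop)),
    integral_add (G.int _ (by fun_prop)) (G.int _ (by fun_prop)),
    integral_add (G.int _ (by fun_prop)) (G.int _ (by fun_prop)),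
    integral_add (G.int _ (by fun_prop)) (G.int _ (by fun_prop)), integral_const_mul, integral_const_mul, integral_const_mul, integral_const_mul] at h1
  linarith

lemma Good.R8 (G : Good σ) {i j : Fin n} (h : i ≠ j) (g : EuclideanSpace ℝ (Fin n) → ℝ) (hg : Continuous g)
    (hinv : ∀ c s x, g (rotL i j c s x) = g x) :
    ∫ x, g x * (x i ^ 8 * x j ^ 0) ∂σ = 4 * ∫ x, g x * (x i ^ 6 * x j ^ 2) ∂σ
      + 5 * ∫ x, g x * (x i ^ 4 * x j ^ 4) ∂σ := by
  have h1 := G.rot i j h (fun x => g x * (x i ^ 8 * x j ^ 0) + g x * (x i ^ 0 * x j ^ 8)) (by fun_prop)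
  have h2 := G.swap4 h g hg hinv 8 0
  have h2' := G.swap4 h g hg hinv 6 2
  have h3 : ∀ x, g (rotL i j (√2)⁻¹ (√2)⁻¹ x) * ((rotL i j (√2)⁻¹ (√2)⁻¹ x) i ^ 8 * (rotL i j (√2)⁻¹ (√2)⁻¹ x) j ^ 0)
      + g (rotL i j (√2)⁻¹ (√2)⁻¹ x) * ((rotL i j (√2)⁻¹ (√2)⁻¹ x) i ^ 0 * (rotL i j (√2)⁻¹ (√2)⁻¹ x) j ^ 8)
      = (1/8) * (g x * (x i ^ 8 * x j ^ 0)) + (1/8) * (g x * (x i ^ 0 * x j ^ 8))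
        + (28/8) * (g x * (x i ^ 6 * x j ^ 2)) + (28/8) * (g x * (x i ^ 2 * x j ^ 6))
        + (70/8) * (g x * (x i ^ 4 * x j ^ 4)) := by
    intro x
    rw [hinv, rotL_i, rotL_j h]
    have e : ((√2:ℝ)⁻¹)^8 = 1/16 := by
      rw [show ((√2:ℝ)⁻¹)^8 = (((√2:ℝ)⁻¹)^2)^4 by rw [← pow_mul], sqrt2_inv_pow]; norm_num
    linear_combination (g x * (2 * x i ^ 8 + 56 * x i ^6 * x j ^2 + 140 * x i ^4 * x j ^4 + 56 * x i ^2 * x j ^6 + 2 * x j ^8)) * e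
  simp only [h3] at h1
  rw [integral_add (G.int _ (by fun_prop)) (G.int _ (by fun_prop)),
    integral_add (G.int _ (by fun_prop)) (G.int _ (by fun_prop)),
    integral_add (G.int _ (by fun_prop)) (G.int _ (by fun_prop)),
    integral_add (G.int _ (by fun_prop)) (G.int _ (by fun_prop)),
    integral_add (G.int _ (by fun_prop)) (G.int _ (by fun_prop)), integral_const_mul, integral_const_mul, integral_const_mul, integral_const_mul, integral_const_mul] at h1
  linarith

lemma Good.sum_sph (G : Good σ) (g : EuclideanSpace ℝ (Fin n) → ℝ) (hg : Continuous g) :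
    ∑ l, ∫ x, x l ^ 2 * g x ∂σ = ∫ x, g x ∂σ := by
  rw [← G.sph g, ← integral_finsetSum]
  · simp only [sum_mul]
  · intro l _; exact G.int _ (by fun_prop)

lemma exists_other (hn : 5 ≤ n) (i j k : Fin n) : ∃ l, l ≠ i ∧ l ≠ j ∧ l ≠ k := by
  have : (({i, j, k} : Finset (Fin n))ᶜ).Nonempty := by
    rw [← card_pos, card_compl, Fintype.card_fin]
    have : ({i, j, k} : Finset (Fin n)).card ≤ 3 := card_le_three
    omega
  obtain ⟨l, hl⟩ := this
  simp at hl
  exact ⟨l, by tauto⟩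

lemma Good.T1 (G : Good σ) (hn : 5 ≤ n) (i : Fin n) : ∫ x, x i ^ 2 ∂σ = 1 / n := by
  have h1 := G.sum_sph (fun _ => 1) (by fun_prop)
  rw [G.one] at h1
  have h2 : ∀ l, ∫ x, x l ^ 2 * 1 ∂σ = ∫ x, x i ^ 2 ∂σ := by
    intro l
    by_cases h : l = i
    · subst h; simp
    · have := G.swap4 h (fun _ => 1) (by fun_prop) (by simp) 2 0
      simpa using this
  simp only [h2] at h1
  simp at h1
  have : (n:ℝ) ≠ 0 := by positivity
  field_simp
  linarith

lemma Good.T2 (G : Good σ) (hn : 5 ≤ n) {i j : Fin n} (hij : i ≠ j) :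
    ∫ x, x i ^ 2 * x j ^ 2 ∂σ = 1 / (n * (n+2)) ∧ ∫ x, x i ^ 2 * x i ^ 2 ∂σ = 3 / (n * (n+2)) := by
  have h1 := G.sum_sph (fun x => x i ^ 2) (by fun_prop)
  rw [G.T1 hn] at h1
  have h3 : ∀ l, l ≠ i → ∫ x, x i ^ 2 * x i ^ 2 ∂σ = 3 * ∫ x, x l ^ 2 * x i ^ 2 ∂σ := by
    intro l hl
    have := G.R4 hl.symm (fun _ => 1) (by fun_prop) (by simp)
    convert this using 2
    · ext x; ring
    · congr 1; ext x; ring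
  set A := ∫ x, x i ^ 2 * x i ^ 2 ∂σ
  have h2 : ∀ l, ∫ x, x l ^ 2 * x i ^ 2 ∂σ = A / 3 + (if l = i then A - A/3 else 0) := by
    intro l
    by_cases h : l = i
    · subst h; simp [A]
    · have := h3 l h
      simp only [h, if_false]; linarith
  simp only [h2, sum_add_distrib, sum_const, card_univ, Fintype.card_fin, nsmul_eq_mul,
    sum_ite_eq', mem_univ, if_true] at h1
  have hn0 : (0:ℝ) < n := by positivity
  have hA : A = 3 / (n * (n+2)) := by
    field_simp
    field_simp at h1
    nlinarith
  refine ⟨?_, hA⟩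
  have := h3 j hij.symm
  have e : ∫ x, x i ^ 2 * x j ^ 2 ∂σ = ∫ x, x j ^ 2 * x i ^ 2 ∂σ := by
    congr 1; ext x; ring
  rw [hA] at this
  rw [e]
  have e : (1:ℝ) / (n * (n+2)) = (3 / (n * (n+2))) / 3 := by ring
  linarith

lemma Good.T3 (G : Good σ) (hn : 5 ≤ n) {i j k : Fin n} (hij : i ≠ j) (hik : i ≠ k) (hjk : j ≠ k) :
    ∫ x, x i ^ 2 * (x j ^ 2 * x k ^ 2) ∂σ = 1 / (n * (n+2) * (n+4)) := by
  have h1 := G.sum_sph (fun x => x j ^ 2 * x k ^ 2) (by fun_prop)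
  rw [(G.T2 hn hjk).1] at h1
  have h3 : ∀ l, l ≠ j → l ≠ k → ∫ x, x j ^ 2 * (x j ^ 2 * x k ^ 2) ∂σ = 3 * ∫ x, x l ^ 2 * (x j ^ 2 * x k ^ 2) ∂σ := by
    intro l hl hl'
    have := G.R4 hl.symm (fun x => x k ^ 2) (by fun_prop) (fun c s x => by rw [rotL_k hjk.symm hl'.symm])
    convert this using 2
    · ext x; ring
    · congr 1; ext x; ring
  have h4 : ∀ l, l ≠ j → l ≠ k → ∫ x, x k ^ 2 * (x j ^ 2 * x k ^ 2) ∂σ = 3 * ∫ x, x l ^ 2 * (x j ^ 2 * x k ^ 2) ∂σ := by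
    intro l hl hl'
    have := G.R4 hl'.symm (fun x => x j ^ 2) (by fun_prop) (fun c s x => by rw [rotL_k hjk hl.symm])
    convert this using 2
    · ext x; ring
    · congr 1; ext x; ring
  set B := ∫ x, x i ^ 2 * (x j ^ 2 * x k ^ 2) ∂σ
  have hj := h3 i hij hik
  have hk := h4 i hij hik
  have h2 : ∀ l, ∫ x, x l ^ 2 * (x j ^ 2 * x k ^ 2) ∂σ
      = B + (if l = j then 2 * B else 0) + (if l = k then 2 * B else 0) := by
    intro l
    by_cases h : l = j
    · subst h; simp only [if_true, hjk, if_false]; linarith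
    · by_cases h' : l = k
      · subst h'; simp only [if_true, h, if_false]; linarith
      · have := h3 l h h'
        simp only [h, h', if_false]; linarith
  simp only [h2, sum_add_distrib, sum_const, card_univ, Fintype.card_fin, nsmul_eq_mul,
    sum_ite_eq', mem_univ, if_true] at h1
  have hn0 : (0:ℝ) < n := by positivity
  field_simp
  field_simp at h1
  linarith

lemma Good.T4 (G : Good σ) (hn : 5 ≤ n) {i j k l : Fin n} (hij : i ≠ j) (hik : i ≠ k) (hjk : j ≠ k)
    (hil : i ≠ l) (hjl : j ≠ l) (hkl : k ≠ l) :
    ∫ x, x i ^ 2 * (x j ^ 2 * (x k ^ 2 * x l ^ 2)) ∂σ = 1 / (n * (n+2) * (n+4) * (n+6)) := by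
  have h1 := G.sum_sph (fun x => x j ^ 2 * (x k ^ 2 * x l ^ 2)) (by fun_prop)
  rw [G.T3 hn hjk hjl hkl] at h1
  have h3 : ∀ m, m ≠ j → m ≠ k → m ≠ l → ∫ x, x j ^ 2 * (x j ^ 2 * (x k ^ 2 * x l ^ 2)) ∂σ
      = 3 * ∫ x, x m ^ 2 * (x j ^ 2 * (x k ^ 2 * x l ^ 2)) ∂σ := by
    intro m h h' h''
    have := G.R4 h.symm (fun x => x k ^ 2 * x l ^ 2) (by fun_prop)
      (fun c s x => by rw [rotL_k hjk.symm h'.symm, rotL_k hjl.symm h''.symm])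
    convert this using 2
    · ext x; ring
    · congr 1; ext x; ring
  have h4 : ∀ m, m ≠ j → m ≠ k → m ≠ l → ∫ x, x k ^ 2 * (x j ^ 2 * (x k ^ 2 * x l ^ 2)) ∂σ
      = 3 * ∫ x, x m ^ 2 * (x j ^ 2 * (x k ^ 2 * x l ^ 2)) ∂σ := by
    intro m h h' h''
    have := G.R4 h'.symm (fun x => x j ^ 2 * x l ^ 2) (by fun_prop)
      (fun c s x => by rw [rotL_k hjk h.symm, rotL_k hkl.symm h''.symm])
    convert this using 2
    · ext x; ring
    · congr 1; ext x; ring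
  have h5 : ∀ m, m ≠ j → m ≠ k → m ≠ l → ∫ x, x l ^ 2 * (x j ^ 2 * (x k ^ 2 * x l ^ 2)) ∂σ
      = 3 * ∫ x, x m ^ 2 * (x j ^ 2 * (x k ^ 2 * x l ^ 2)) ∂σ := by
    intro m h h' h''
    have := G.R4 h''.symm (fun x => x j ^ 2 * x k ^ 2) (by fun_prop)
      (fun c s x => by rw [rotL_k hjl h.symm, rotL_k hkl h'.symm])
    convert this using 2
    · ext x; ring
    · congr 1; ext x; ring
  set B := ∫ x, x i ^ 2 * (x j ^ 2 * (x k ^ 2 * x l ^ 2)) ∂σ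
  have hj := h3 i hij hik hil
  have hk := h4 i hij hik hil
  have hl := h5 i hij hik hil
  have h2 : ∀ m, ∫ x, x m ^ 2 * (x j ^ 2 * (x k ^ 2 * x l ^ 2)) ∂σ
      = B + (if m = j then 2 * B else 0) + (if m = k then 2 * B else 0) + (if m = l then 2 * B else 0) := by
    intro m
    by_cases h : m = j
    · subst h; simp only [if_true, hjk, hjl, if_false]; linarith
    · by_cases h' : m = k
      · subst h'; simp only [if_true, h, hkl, if_false]; linarith
      · by_cases h'' : m = l
        · subst h''; simp only [if_true, h, h', if_false]; linarith
        · have := h3 m h h' h''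
          simp only [h, h', h'', if_false]; linarith
  simp only [h2, sum_add_distrib, sum_const, card_univ, Fintype.card_fin, nsmul_eq_mul,
    sum_ite_eq', mem_univ, if_true] at h1
  have hn0 : (0:ℝ) < n := by positivity
  field_simp
  field_simp at h1
  linarith

lemma Good.T422 (G : Good σ) (hn : 5 ≤ n) {i j k : Fin n} (hij : i ≠ j) (hik : i ≠ k) (hjk : j ≠ k) :
    ∫ x, x i ^ 4 * (x j ^ 2 * x k ^ 2) ∂σ = 3 / (n * (n+2) * (n+4) * (n+6)) := by
  obtain ⟨l, hi, hj, hk⟩ := exists_other hn i j k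
  have h1 := G.T4 hn hij hik hjk hi.symm hj.symm hk.symm
  have := G.R4 hi.symm (fun x => x j ^ 2 * x k ^ 2) (by fun_prop)
      (fun c s x => by rw [rotL_k hij.symm hj.symm, rotL_k hik.symm hk.symm])
  have e : ∀ z : ℝ, 3 / z = 3 * (1 / z) := fun z => by ring
  rw [e, ← h1]
  convert this using 2
  · ext x; ring
  · congr 1; ext x; ring

lemma Good.T44 (G : Good σ) (hn : 5 ≤ n) {i j : Fin n} (hij : i ≠ j) :
    ∫ x, x i ^ 4 * x j ^ 4 ∂σ = 9 / (n * (n+2) * (n+4) * (n+6)) := by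
  obtain ⟨l, hi, hj, -⟩ := exists_other hn i j j
  have h1 := G.T422 hn hij hi.symm hj.symm
  have := G.R4 hj.symm (fun x => x i ^ 4) (by fun_prop)
      (fun c s x => by rw [rotL_k hij hi.symm])
  have e : ∀ z : ℝ, 9 / z = 3 * (3 / z) := fun z => by ring
  rw [e, ← h1]
  convert this using 2
  ext x; ring

lemma Good.T62 (G : Good σ) (hn : 5 ≤ n) {i j : Fin n} (hij : i ≠ j) :
    ∫ x, x i ^ 6 * x j ^ 2 ∂σ = 15 / (n * (n+2) * (n+4) * (n+6)) := by
  obtain ⟨l, hi, hj, -⟩ := exists_other hn i j j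
  have h1 := G.T422 hn hij hi.symm hj.symm
  have := G.R6 hi.symm (fun x => x j ^ 2) (by fun_prop)
      (fun c s x => by rw [rotL_k hij.symm hj.symm])
  have e : ∀ z : ℝ, 15 / z = 5 * (3 / z) := fun z => by ring
  rw [e, ← h1]
  convert this using 2
  · ext x; ring
  · congr 1; ext x; ring

lemma Good.T8 (G : Good σ) (hn : 5 ≤ n) (i : Fin n) :
    ∫ x, x i ^ 8 ∂σ = 105 / (n * (n+2) * (n+4) * (n+6)) := by
  obtain ⟨l, hi, -, -⟩ := exists_other hn i i i
  have h1 := G.T44 hn hi.symm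
  have h2 := G.T62 hn hi.symm
  have := G.R8 hi.symm (fun _ => 1) (by fun_prop) (by simp)
  simp only [one_mul, pow_zero, mul_one] at this
  rw [this, h1, h2]
  ring

/-- Kronecker delta -/
def dl (i j : Fin n) : ℝ := if i = j then 1 else 0

lemma Good.mom (G : Good σ) (hn : 5 ≤ n) (i j k l : Fin n) :
    ∫ x, (x i ^ 2 * x j ^ 2) * (x k ^ 2 * x l ^ 2) ∂σ
     = 1 / (n * (n+2) * (n+4) * (n+6)) *
      (1 + 2 * (dl i j + dl k l + dl i k + dl i l + dl j k + dl j l)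
       + 4 * (dl i j * dl k l + dl i k * dl j l + dl i l * dl j k)
       + 8 * (dl i j * dl i k + dl i j * dl i l + dl i k * dl k l + dl j k * dl k l)
       + 48 * (dl i j * dl i k * dl i l)) := by
  have e : ∀ z c : ℝ, 1 / z * c = c / z := fun z c => by ring
  rw [e]
  by_cases hij : i = j
  · subst hij
    by_cases hik : i = k
    · subst hik
      by_cases hil : i = l
      · subst hil
        simp only [dl, if_true]
        convert G.T8 hn i using 1
        · congr 1; ext x; ring
        · norm_num
      · simp only [dl, if_true, hil, if_false]
        convert G.T62 hn hil using 1
        · congr 1; ext x; ring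
        · norm_num
    · by_cases hil : i = l
      · subst hil
        simp only [dl, if_true, hik, Ne.symm hik, if_false]
        convert G.T62 hn hik using 1
        · congr 1; ext x; ring
        · norm_num
      · by_cases hkl : k = l
        · subst hkl
          simp only [dl, if_true, hik, if_false]
          convert G.T44 hn hik using 1
          · congr 1; ext x; ring
          · norm_num
        · simp only [dl, if_true, hik, hil, hkl, if_false]
          convert G.T422 hn hik hil hkl using 1
          · congr 1; ext x; ring
          · norm_num
  · by_cases hik : i = k
    · subst hik
      by_cases hil : i = l
      · subst hil
        simp only [dl, if_true, hij, Ne.symm hij, if_false]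
        convert G.T62 hn hij using 1
        · congr 1; ext x; ring
        · norm_num
      · by_cases hjl : j = l
        · subst hjl
          simp only [dl, if_true, hij, Ne.symm hij, if_false]
          convert G.T44 hn hij using 1
          · congr 1; ext x; ring
          · norm_num
        · simp only [dl, if_true, hij, Ne.symm hij, hil, hjl, if_false]
          convert G.T422 hn hij hil hjl using 1
          · congr 1; ext x; ring
          · norm_num
    · by_cases hil : i = l
      · subst hil
        by_cases hjk : j = k
        · subst hjk
          simp only [dl, if_true, hij, Ne.symm hij, if_false]
          convert G.T44 hn hij using 1
          · congr 1; ext x; ring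
          · norm_num
        · simp only [dl, if_true, hij, Ne.symm hij, hik, Ne.symm hik, hjk, if_false]
          convert G.T422 hn hij hik hjk using 1
          · congr 1; ext x; ring
          · norm_num
      · by_cases hjk : j = k
        · subst hjk
          by_cases hjl : j = l
          · subst hjl
            simp only [dl, if_true, hij, if_false]
            convert G.T62 hn (Ne.symm hij) using 1
            · congr 1; ext x; ring
            · norm_num
          · simp only [dl, if_true, hij, hil, hjl, if_false]
            convert G.T422 hn (Ne.symm hij) hjl hil using 1
            · congr 1; ext x; ring
            · norm_num
        · by_cases hjl : j = l
          · subst hjl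
            simp only [dl, if_true, hij, hik, hjk, Ne.symm hjk, if_false]
            convert G.T422 hn (Ne.symm hij) hjk hik using 1
            · congr 1; ext x; ring
            · norm_num
          · by_cases hkl : k = l
            · subst hkl
              simp only [dl, if_true, hij, hik, hjk, if_false]
              convert G.T422 hn (Ne.symm hik) (Ne.symm hjk) hij using 1
              · congr 1; ext x; ring
              · norm_num
            · simp only [dl, hij, hik, hjk, hil, hjl, hkl, if_false]
              convert G.T4 hn hij hik hjk hil hjl hkl using 1
              · congr 1; ext x; ring
              · norm_num

lemma Good.mean (G : Good σ) (hn : 5 ≤ n) (a : symSub n) :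
    ∫ x, qfun a x ∂σ = 1 / (n * (n+2)) * (∑ i, ∑ j, a.1 i j + 2 * ∑ i, a.1 i i) := by
  unfold qfun
  rw [integral_finsetSum _ (fun i _ => G.int _ (by fun_prop))]
  have : ∀ i, ∫ x, ∑ j, a.1 i j * x i ^ 2 * x j ^ 2 ∂σ
      = 1 / (n * (n+2)) * (∑ j, a.1 i j + 2 * a.1 i i) := by
    intro i
    rw [integral_finsetSum _ (fun i _ => G.int _ (by fun_prop))]
    have : ∀ j, ∫ x, a.1 i j * x i ^ 2 * x j ^ 2 ∂σ
        = 1 / (n * (n+2)) * (a.1 i j + if i = j then 2 * a.1 i j else 0) := by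
      intro j
      simp only [mul_assoc]
      rw [integral_const_mul]
      by_cases h : i = j
      · subst h
        obtain ⟨l, hi, -, -⟩ := exists_other hn i i i
        rw [(G.T2 hn hi.symm).2]
        simp only [if_true]; ring
      · rw [(G.T2 hn h).1]
        simp only [h, if_false]; ring
    simp only [this]
    rw [← mul_sum, sum_add_distrib, sum_ite_eq]
    simp
  simp only [this]
  rw [← mul_sum, sum_add_distrib, mul_sum]

lemma sum_dl (f : Fin n → ℝ) (i : Fin n) : ∑ l, f l * dl i l = f i := by
  simp [dl]

lemma wsum (a : Fin n → Fin n → ℝ) (ha : ∀ i j, a i j = a j i) (i j : Fin n) :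
    ∑ k, ∑ l, a k l * (1 + 2 * (dl i j + dl k l + dl i k + dl i l + dl j k + dl j l)
       + 4 * (dl i j * dl k l + dl i k * dl j l + dl i l * dl j k)
       + 8 * (dl i j * dl i k + dl i j * dl i l + dl i k * dl k l + dl j k * dl k l)
       + 48 * (dl i j * dl i k * dl i l))
    = (∑ k, ∑ l, a k l) + 2 * (∑ k, a k k) + 4 * (∑ l, a i l) + 4 * (∑ l, a j l) + 8 * a i j
      + 8 * a i i + 8 * a j j
      + (2 * (∑ k, ∑ l, a k l) + 4 * (∑ k, a k k) + 16 * (∑ l, a i l) + 48 * a i i) * dl i j := by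
  have h1 : ∀ k, ∑ l, a k l * (1 + 2 * (dl i j + dl k l + dl i k + dl i l + dl j k + dl j l)
       + 4 * (dl i j * dl k l + dl i k * dl j l + dl i l * dl j k)
       + 8 * (dl i j * dl i k + dl i j * dl i l + dl i k * dl k l + dl j k * dl k l)
       + 48 * (dl i j * dl i k * dl i l))
      = (1 + 2 * dl i j) * (∑ l, a k l) + (2 + 4 * dl i j) * a k k + (2 + 8 * dl i j) * a i k
        + 2 * a j k + ((2 + 8 * dl i j) * (∑ l, a k l) + 8 * a k k + 48 * dl i j * a i k + 4 * a j k) * dl i k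
        + (2 * (∑ l, a k l) + 8 * a k k + 4 * a i k) * dl j k := by
    intro k
    have e : ∀ l, a k l * (1 + 2 * (dl i j + dl k l + dl i k + dl i l + dl j k + dl j l)
       + 4 * (dl i j * dl k l + dl i k * dl j l + dl i l * dl j k)
       + 8 * (dl i j * dl i k + dl i j * dl i l + dl i k * dl k l + dl j k * dl k l)
       + 48 * (dl i j * dl i k * dl i l))
       = (1 + 2 * dl i j + 2 * dl i k + 2 * dl j k + 8 * dl i j * dl i k) * a k l
         + (2 + 4 * dl i j + 8 * dl i k + 8 * dl j k) * (a k l * dl k l)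
         + (2 + 4 * dl j k + 8 * dl i j + 48 * dl i j * dl i k) * (a k l * dl i l)
         + (2 + 4 * dl i k) * (a k l * dl j l) := by intro l; ring
    simp only [e, sum_add_distrib, ← mul_sum, sum_dl]
    rw [ha k i, ha k j]
    ring
  simp only [h1, sum_add_distrib, ← mul_sum, sum_dl]
  rw [ha j i]
  ring

lemma qsum (a : Fin n → Fin n → ℝ) (ha : ∀ i j, a i j = a j i) :
    8 * ∑ i, ∑ j, a i j ^ 2 + 16 * ∑ i, a i i ^ 2 ≤
    ∑ i, ∑ j, a i j * ((∑ k, ∑ l, a k l) + 2 * (∑ k, a k k) + 4 * (∑ l, a i l) + 4 * (∑ l, a j l) + 8 * a i j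
      + 8 * a i i + 8 * a j j
      + (2 * (∑ k, ∑ l, a k l) + 4 * (∑ k, a k k) + 16 * (∑ l, a i l) + 48 * a i i) * dl i j) := by
  set s := ∑ k, ∑ l, a k l with hs
  set τ := ∑ k, a k k with hτ
  set r : Fin n → ℝ := fun i => ∑ l, a i l with hr
  have hr' : ∀ i, ∑ l, a i l = r i := fun i => rfl
  have hc : ∀ j, ∑ i, a i j = r j := fun j => by
    rw [← hr' j]; exact sum_congr rfl fun i _ => ha i j
  have key : ∑ i, ∑ j, a i j * (s + 2 * τ + 4 * r i + 4 * r j + 8 * a i j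
      + 8 * a i i + 8 * a j j + (2 * s + 4 * τ + 16 * r i + 48 * a i i) * dl i j)
      = (s + 2 * τ) ^ 2 + 8 * ∑ i, (r i + 2 * a i i) ^ 2 + (8 * ∑ i, ∑ j, a i j ^ 2 + 16 * ∑ i, a i i ^ 2) := by
    have e : ∀ i j, a i j * (s + 2 * τ + 4 * r i + 4 * r j + 8 * a i j
      + 8 * a i i + 8 * a j j + (2 * s + 4 * τ + 16 * r i + 48 * a i i) * dl i j)
      = (s + 2 * τ + 4 * r i + 8 * a i i) * a i j + a i j * (4 * r j + 8 * a j j) + 8 * a i j ^ 2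
        + (2 * s + 4 * τ + 16 * r i + 48 * a i i) * (a i j * dl i j) := by intro i j; ring
    simp only [e, sum_add_distrib, ← mul_sum, sum_dl]
    have e2 : ∑ i, ∑ j, a i j * (4 * r j + 8 * a j j) = ∑ i, r i * (4 * r i + 8 * a i i) := by
      rw [sum_comm]
      refine sum_congr rfl fun j _ => ?_
      rw [← sum_mul, hc]
    have e3 : ∑ i, (s + 2 * τ + 4 * r i + 8 * a i i) * ∑ j, a i j
        = (s + 2 * τ) * s + ∑ i, (4 * r i + 8 * a i i) * r i := by
      have : ∀ i, (s + 2 * τ + 4 * r i + 8 * a i i) * ∑ j, a i j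
          = (s + 2 * τ) * ∑ j, a i j + (4 * r i + 8 * a i i) * r i := by
        intro i; rw [hr' i]; ring
      simp only [this, sum_add_distrib, ← mul_sum]
      rw [← hs]
    have e4 : ∑ i, (2 * s + 4 * τ + 16 * r i + 48 * a i i) * a i i
        = (2 * s + 4 * τ) * τ + ∑ i, (16 * r i + 48 * a i i) * a i i := by
      have : ∀ i, (2 * s + 4 * τ + 16 * r i + 48 * a i i) * a i i
          = (2 * s + 4 * τ) * a i i + (16 * r i + 48 * a i i) * a i i := by
        intro i; ring
      simp only [this, sum_add_distrib, ← mul_sum]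
      rw [← hτ]
    rw [e2, e3, e4]
    have e5 : ∑ i, (4 * r i + 8 * a i i) * r i + ∑ i, r i * (4 * r i + 8 * a i i)
        + ∑ i, (16 * r i + 48 * a i i) * a i i
        = 8 * ∑ i, (r i + 2 * a i i) ^ 2 + 16 * ∑ i, a i i ^ 2 := by
      rw [mul_sum, mul_sum, ← sum_add_distrib, ← sum_add_distrib, ← sum_add_distrib]
      refine sum_congr rfl fun i _ => ?_
      ring
    linear_combination e5
  simp only [hr'] at key ⊢
  rw [key]
  have : 0 ≤ 8 * ∑ i, (r i + 2 * a i i) ^ 2 := by positivity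
  nlinarith [sq_nonneg (s + 2 * τ)]

lemma Good.L2 (G : Good σ) (hn : 5 ≤ n) (a : symSub n) :
    1 / (n * (n+2) * (n+4) * (n+6)) * (8 * ∑ i, ∑ j, a.1 i j ^ 2 + 16 * ∑ i, a.1 i i ^ 2)
      ≤ ∫ x, qfun a x * qfun a x ∂σ := by
  have h1 : ∀ x, qfun a x * qfun a x =
      ∑ i, ∑ j, ∑ k, ∑ l, (a.1 i j * a.1 k l) * ((x i ^ 2 * x j ^ 2) * (x k ^ 2 * x l ^ 2)) := by
    intro x
    unfold qfun
    simp only [sum_mul, mul_sum]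
    refine sum_congr rfl fun i _ => sum_congr rfl fun j _ => sum_congr rfl fun k _ =>
      sum_congr rfl fun l _ => ?_
    ring
  have h2 : ∫ x, qfun a x * qfun a x ∂σ = ∑ i, ∑ j, ∑ k, ∑ l, (a.1 i j * a.1 k l) *
      ∫ x, ((x i ^ 2 * x j ^ 2) * (x k ^ 2 * x l ^ 2)) ∂σ := by
    simp only [h1]
    rw [integral_finsetSum _ (fun i _ => G.int _ (by fun_prop))]
    refine sum_congr rfl fun i _ => ?_
    rw [integral_finsetSum _ (fun i _ => G.int _ (by fun_prop))]
    refine sum_congr rfl fun j _ => ?_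
    rw [integral_finsetSum _ (fun i _ => G.int _ (by fun_prop))]
    refine sum_congr rfl fun k _ => ?_
    rw [integral_finsetSum _ (fun i _ => G.int _ (by fun_prop))]
    refine sum_congr rfl fun l _ => ?_
    rw [integral_const_mul]
  rw [h2]
  simp only [G.mom hn]
  have h3 := qsum a.1 a.2
  simp only [← wsum a.1 a.2] at h3
  refine (mul_le_mul_of_nonneg_left h3 (by positivity)).trans_eq ?_
  simp only [mul_sum]
  refine sum_congr rfl fun i _ => sum_congr rfl fun j _ => sum_congr rfl fun k _ =>
      sum_congr rfl fun l _ => ?_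
  ring
end moments

lemma fact_bound (d : ℕ) : (d.factorial : ℝ) ≤ (((d:ℝ)+1)/2)^d := by
  induction d with
  | zero => simp
  | succ d ih =>
    rw [Nat.factorial_succ]
    push_cast
    have hb := one_add_mul_le_pow (a := (1:ℝ)/(d+1)) (by
      have : (0:ℝ) ≤ 1/((d:ℝ)+1) := by positivity
      linarith) (d+1)
    have h1 : (1:ℝ) + ((d+1 : ℕ):ℝ) * (1/(d+1)) = 2 := by
      push_cast; field_simp; norm_num
    rw [h1] at hb
    have h2 : ((d:ℝ)+1+1)/2 = (((d:ℝ)+1)/2) * (1 + 1/(d+1)) := by field_simp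
    rw [h2, mul_pow]
    calc ((d:ℝ)+1) * d.factorial ≤ ((d:ℝ)+1) * (((d:ℝ)+1)/2)^d := by gcongr
      _ = (((d:ℝ)+1)/2)^(d+1) * 2 := by rw [pow_succ]; ring
      _ ≤ _ := by gcongr

lemma gamma_bound (d : ℕ) (hd : 4 ≤ d) :
    (d.factorial : ℝ) ≤ Real.Gamma ((d:ℝ)/2+1)^2 * 2^d := by
  have h := Real.Gamma_mul_Gamma_add_half ((d:ℝ)/2+1/2)
  have hd' : (4:ℝ) ≤ d := by exact_mod_cast hd
  rw [show (d:ℝ)/2+1/2+1/2 = d/2+1 by ring, show 2 * ((d:ℝ)/2+1/2) = d + 1 by ring,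
    Real.Gamma_nat_eq_factorial, show (1:ℝ) - (d+1) = -(d:ℝ) by ring,
    Real.rpow_neg (by norm_num), Real.rpow_natCast] at h
  have hm : Real.Gamma ((d:ℝ)/2+1/2) ≤ Real.Gamma ((d:ℝ)/2+1) :=
    Real.Gamma_strictMonoOn_Ici.monotoneOn (by simp only [Set.mem_Ici]; linarith) (by simp only [Set.mem_Ici]; linarith) (by linarith)
  have hpos : 0 < Real.Gamma ((d:ℝ)/2+1) := Real.Gamma_pos_of_pos (by positivity)
  have hpi : 1 ≤ √Real.pi := by
    rw [Real.one_le_sqrt]; linarith [Real.pi_gt_three]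
  have h2 : (d.factorial:ℝ) * (2^d)⁻¹ * √Real.pi ≤ Real.Gamma ((d:ℝ)/2+1)^2 := by
    rw [← h, sq]; gcongr
  have h3 : (d.factorial:ℝ) * (2^d)⁻¹ ≤ Real.Gamma ((d:ℝ)/2+1)^2 :=
    (le_mul_of_one_le_right (by positivity) hpi).trans h2
  rwa [← div_eq_mul_inv, div_le_iff₀ (by positivity)] at h3

lemma num_bound (n d : ℕ) (hn : 5 ≤ n) (hd : 2 * (d + 1) = n * (n+1)) :
    Real.pi ^ d * d.factorial ≤ (2/3 : ℝ)^n * (4 * ((n:ℝ)*(n+2)/((n+4)*(n+6))))^(d+1) * ((n:ℝ)^2)^d := by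
  have hn' : (5:ℝ) ≤ n := by exact_mod_cast hn
  set ρ : ℝ := (n:ℝ)*(n+2)/((n+4)*(n+6)) with hρ
  have hρ1 : 35/99 ≤ ρ := by
    rw [hρ, div_le_div_iff₀ (by norm_num) (by positivity)]
    nlinarith
  have hd2 : 2 * n ≤ d := by nlinarith
  have hdr : ((d:ℝ)+1)/2 = n * (n+1) / 4 := by
    have : (2:ℝ) * (d+1) = n * (n+1) := by exact_mod_cast hd
    linarith
  have hbase : 1.49 * (Real.pi * (n * (n+1)/4)) ≤ 4 * ρ * (n:ℝ)^2 := by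
    have hpi : Real.pi ≤ 3.15 := Real.pi_lt_d2.le
    calc 1.49 * (Real.pi * (n * (n+1)/4)) ≤ 1.49 * (3.15 * (n * (n+1)/4)) := by gcongr
      _ ≤ 4 * (35/99) * (n:ℝ)^2 := by nlinarith
      _ ≤ _ := by gcongr
  have h15 : (3/2:ℝ)^n ≤ 1.49^d := by
    calc (3/2:ℝ)^n ≤ (1.49^2)^n := by gcongr; norm_num
      _ = 1.49^(2*n) := by rw [pow_mul]
      _ ≤ _ := pow_le_pow_right₀ (by norm_num) hd2
  calc Real.pi ^ d * d.factorial ≤ Real.pi^d * (n * (n+1) / 4)^d := by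
        rw [← hdr]; gcongr; exact fact_bound d
    _ = (2/3)^n * (3/2)^n * (Real.pi * (n * (n+1) / 4))^d := by
        rw [← mul_pow, ← mul_pow]; norm_num
    _ ≤ (2/3)^n * 1.49^d * (Real.pi * (n * (n+1) / 4))^d := by gcongr
    _ = (2/3)^n * 1 * (1.49 * (Real.pi * (n * (n+1) / 4)))^d := by rw [mul_pow 1.49]; ring
    _ ≤ (2/3)^n * (4 * ρ) * (4 * ρ * (n:ℝ)^2)^d := by
        gcongr; linarith
    _ = _ := by rw [mul_pow (4*ρ), pow_succ]; ring

lemma final_bound (n d : ℕ) (hn : 5 ≤ n) (hd : 2 * (d + 1) = n * (n+1)) (V P : ℝ) (hV : 0 ≤ V)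
    (hP : 0 ≤ P) (hP2 : P^2 = (2/3 : ℝ)^n * (4 * ((n:ℝ)*(n+2)/((n+4)*(n+6))))^(d+1))
    (h : P ≤ d.factorial * V) :
    1 / (Real.sqrt 2 * n) ≤ (V / (volume (Metric.closedBall (0 : EuclideanSpace ℝ (Fin d)) 1)).toReal) ^ ((1:ℝ)/(d:ℝ)) := by
  have hd4 : 4 ≤ d := by nlinarith
  have : Nonempty (Fin d) := ⟨⟨0, by omega⟩⟩
  have hn' : (5:ℝ) ≤ n := by exact_mod_cast hn
  rw [EuclideanSpace.volume_closedBall]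
  have hG : 0 < Real.Gamma ((d:ℝ)/2+1) := Real.Gamma_pos_of_pos (by positivity)
  have hpi := Real.pi_pos
  simp only [ENNReal.ofReal_one, one_pow, one_mul, Fintype.card_fin]
  rw [ENNReal.toReal_ofReal (by positivity)]
  set g := Real.Gamma ((d:ℝ)/2+1) with hg
  have hgb := gamma_bound d hd4
  rw [← hg] at hgb
  have hnum := num_bound n d hn hd
  rw [← hP2] at hnum
  have hf : (0:ℝ) < d.factorial := by exact_mod_cast d.factorial_pos
  have key : (1 / (√2 * n))^d ≤ V / (√Real.pi ^ d / g) := by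
    rw [le_div_iff₀ (by positivity)]
    refine le_of_sq_le_sq ?_ hV
    have e1 : ((1 / (√2 * n))^d * (√Real.pi ^ d / g))^2 = Real.pi^d / ((2:ℝ)^d * ((n:ℝ)^2)^d * g^2) := by
      have : ∀ z : ℝ, (z^d)^2 = (z^2)^d := fun z => by rw [← pow_mul, ← pow_mul, mul_comm]
      rw [mul_pow, this, div_pow (√Real.pi ^ d), this, div_pow 1, mul_pow (√2), Real.sq_sqrt (by norm_num), Real.sq_sqrt hpi.le, one_pow, div_pow, mul_pow, one_pow]
      field_simp
    rw [e1, div_le_iff₀ (by positivity)]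
    have h2 : P^2 ≤ (d.factorial:ℝ)^2 * V^2 := by rw [← mul_pow]; gcongr
    have h3 : Real.pi^d * d.factorial ≤ (d.factorial:ℝ) * (g^2 * 2^d) * V^2 * ((n:ℝ)^2)^d := by
      calc _ ≤ _ := hnum
        _ ≤ (d.factorial:ℝ)^2 * V^2 * ((n:ℝ)^2)^d := by gcongr
        _ = (d.factorial:ℝ) * d.factorial * V^2 * ((n:ℝ)^2)^d := by ring
        _ ≤ _ := by gcongr
    refine le_of_mul_le_mul_right ?_ hf
    linarith
  have hd0 : d ≠ 0 := by omega
  calc 1 / (√2 * n) = ((1 / (√2 * n))^d) ^ ((1:ℝ)/(d:ℝ)) := by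
        rw [one_div (d:ℝ), Real.pow_rpow_inv_natCast (by positivity) hd0]
    _ ≤ _ := by gcongr

section assembly
variable {n : ℕ}

/-- strictly upper triangular index pairs -/
abbrev Up (n : ℕ) := {p : Fin n × Fin n // p.1 < p.2}

lemma sum_sym (f : Fin n → Fin n → ℝ) (hf : ∀ i j, f i j = f j i) :
    ∑ i, ∑ j, f i j = ∑ i, f i i + 2 * ∑ p : Up n, f p.1.1 p.1.2 := by
  have h1 : ∀ i j, f i j = (if i = j then f i j else 0) + (if i < j then f i j else 0)
      + (if j < i then f i j else 0) := by
    intro i j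
    rcases lt_trichotomy i j with h | h | h
    · simp [h, h.ne, h.not_gt]
    · subst h; simp
    · simp [h, h.ne', h.not_gt]
  have h2 : ∑ p : Up n, f p.1.1 p.1.2 = ∑ i, ∑ j, if i < j then f i j else 0 := by
    rw [← Fintype.sum_prod_type' (f := fun i j => if i < j then f i j else 0), ← sum_filter]
    exact (sum_subtype (univ.filter fun p : Fin n × Fin n => p.1 < p.2) (by simp) (fun p => f p.1 p.2)).symm
  have h3 : ∑ i, ∑ j, (if j < i then f i j else 0) = ∑ i, ∑ j, if i < j then f i j else 0 := by
    rw [sum_comm]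
    refine sum_congr rfl fun i _ => sum_congr rfl fun j _ => ?_
    rw [hf]
  rw [sum_congr rfl fun i _ => sum_congr rfl fun j _ => h1 i j]
  simp only [sum_add_distrib]
  rw [h3, h2]
  simp only [sum_ite_eq, mem_univ, if_true]
  ring

lemma card_up (n : ℕ) : n + 2 * Fintype.card (Up n) = n * n := by
  have h := sum_sym (n := n) (fun _ _ => 1) (by simp)
  simp only [sum_const, card_univ, Fintype.card_fin, nsmul_eq_mul, mul_one] at h
  have h' : (n:ℝ) * n = n + 2 * (Fintype.card (Up n) : ℝ) := h
  exact_mod_cast h'.symm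

/-- coefficient functional -/
def coef (κ : Fin n ⊕ Up n) (a : symSub n) : ℝ :=
  Sum.elim (fun i => a.1 i i) (fun p => a.1 p.1.1 p.1.2) κ

lemma coef_add (κ : Fin n ⊕ Up n) (a b : symSub n) : coef κ (a + b) = coef κ a + coef κ b := by
  cases κ <;> rfl

lemma coef_smul (κ : Fin n ⊕ Up n) (t : ℝ) (a : symSub n) : coef κ (t • a) = t * coef κ a := by
  cases κ <;> rfl

lemma coef_rQ (κ : Fin n ⊕ Up n) : coef κ (rQ n) = 1 := by
  cases κ <;> rfl

lemma coef_forall (a : symSub n) (P : ℝ → Prop) :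
    (∀ κ, P (coef κ a)) ↔ ∀ i j, P (a.1 i j) := by
  constructor
  · intro h i j
    rcases lt_trichotomy i j with h' | h' | h'
    · exact h (Sum.inr ⟨(i, j), h'⟩)
    · subst h'; exact h (Sum.inl i)
    · rw [a.2 i j]; exact h (Sum.inr ⟨(j, i), h'⟩)
  · intro h κ
    cases κ
    · exact h _ _
    · exact h _ _

lemma qfun_add (a b : symSub n) (x) : qfun (a + b) x = qfun a x + qfun b x := by
  unfold qfun
  rw [← sum_add_distrib]
  refine sum_congr rfl fun i _ => ?_
  rw [← sum_add_distrib]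
  refine sum_congr rfl fun j _ => ?_
  change (a.1 i j + b.1 i j) * _ * _ = _
  ring

lemma qfun_smul (t : ℝ) (a : symSub n) (x) : qfun (t • a) x = t * qfun a x := by
  unfold qfun
  simp only [mul_sum]
  refine sum_congr rfl fun i _ => sum_congr rfl fun j _ => ?_
  change (t * a.1 i j) * _ * _ = _
  ring

lemma qfun_rQ (x) : qfun (rQ n) x = (∑ i, x i ^ 2) * ∑ i, x i ^ 2 := by
  unfold qfun
  rw [sum_mul_sum]
  refine sum_congr rfl fun i _ => sum_congr rfl fun j _ => ?_
  change 1 * _ * _ = _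
  ring

lemma qfun_cont (a : symSub n) : Continuous (qfun a) := by
  unfold qfun; fun_prop

variable {σ : Measure (EuclideanSpace ℝ (Fin n))}

lemma Good.rmul (G : Good σ) (g : EuclideanSpace ℝ (Fin n) → ℝ) :
    ∫ x, qfun (rQ n) x * g x ∂σ = ∫ x, g x ∂σ := by
  simp only [qfun_rQ, mul_assoc]
  rw [G.sph, G.sph]

/-- scaling of the coordinates -/
def Asc (κ : Fin n ⊕ Up n) : ℝ :=
  Sum.elim (fun _ => √(24 / ((n:ℝ) * (n+2) * (n+4) * (n+6)))) (fun _ => √(16 / ((n:ℝ) * (n+2) * (n+4) * (n+6)))) κ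

/-- weights -/
def wsc (κ : Fin n ⊕ Up n) : ℝ :=
  Sum.elim (fun _ => 3) (fun _ => 2) κ / ((n:ℝ) * (n+2) * Asc κ)

lemma Asc_pos (hn : 5 ≤ n) (κ : Fin n ⊕ Up n) : 0 < Asc κ := by
  have : (0:ℝ) < n := by positivity
  cases κ <;> simp only [Asc, Sum.elim_inl, Sum.elim_inr] <;> positivity

lemma wsc_pos (hn : 5 ≤ n) (κ : Fin n ⊕ Up n) : 0 < wsc κ := by
  have : (0:ℝ) < n := by positivity
  have := Asc_pos hn κ
  cases κ <;> simp only [wsc, Sum.elim_inl, Sum.elim_inr] <;> positivity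

lemma sum_coef_sq (hn : 5 ≤ n) (a : symSub n) :
    ∑ κ, (Asc κ * coef κ a)^2 = 1 / (n * (n+2) * (n+4) * (n+6)) * (8 * ∑ i, ∑ j, a.1 i j ^ 2 + 16 * ∑ i, a.1 i i ^ 2) := by
  rw [sum_sym (fun i j => a.1 i j ^ 2) (fun i j => by rw [a.2 i j]), Fintype.sum_sum_type]
  simp only [mul_pow, Asc, coef, Sum.elim_inl, Sum.elim_inr]
  rw [Real.sq_sqrt (by positivity), Real.sq_sqrt (by positivity), ← mul_sum, ← mul_sum]
  ring

lemma sum_coef_mean (hn : 5 ≤ n) (a : symSub n) :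
    ∑ κ, wsc κ * (Asc κ * coef κ a) = 1 / (n * (n+2)) * (∑ i, ∑ j, a.1 i j + 2 * ∑ i, a.1 i i) := by
  rw [sum_sym a.1 a.2]
  have : ∀ κ : Fin n ⊕ Up n, wsc κ * (Asc κ * coef κ a)
      = 1 / ((n:ℝ) * (n+2)) * (Sum.elim (fun _ => 3) (fun _ => 2) κ * coef κ a) := by
    intro κ
    have h1 := Asc_pos hn κ
    have : (0:ℝ) < n := by positivity
    unfold wsc
    field_simp
  simp only [this]
  rw [← mul_sum, Fintype.sum_sum_type]
  simp only [coef, Sum.elim_inl, Sum.elim_inr]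
  rw [← mul_sum, ← mul_sum]
  ring

lemma prod_wsc (hn : 5 ≤ n) (d : ℕ) (hd : 2 * (d + 1) = n * (n+1)) :
    (∏ κ : Fin n ⊕ Up n, (wsc κ)⁻¹)^2
      = (2/3 : ℝ)^n * (4 * ((n:ℝ)*(n+2)/((n+4)*(n+6))))^(d+1) := by
  have hc : d + 1 = n + Fintype.card (Up n) := by
    have := card_up n
    nlinarith
  have hn0 : (0:ℝ) < n := by positivity
  rw [hc, pow_add, Fintype.prod_sum_type]
  simp only [wsc, Asc, Sum.elim_inl, Sum.elim_inr, prod_const, card_univ, Fintype.card_fin]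
  have hsw : ∀ (z : ℝ) (m : ℕ), (z^m)^2 = (z^2)^m := fun z m => by rw [← pow_mul, ← pow_mul, mul_comm]
  rw [mul_pow, hsw, hsw, ← mul_assoc, ← mul_pow]
  congr 2
  · rw [inv_pow, div_pow, mul_pow, Real.sq_sqrt (by positivity)]
    field_simp
    norm_num
  · rw [inv_pow, div_pow, mul_pow, Real.sq_sqrt (by positivity)]
    field_simp
    norm_num

lemma assemble (d : ℕ) (hn : 5 ≤ n) (hd : 2 * (d + 1) = n * (n+1)) (G : Good σ)
    (ψ : EuclideanSpace ℝ (Fin d) →ₗ[ℝ] symSub n)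
    (hψinj : Function.Injective ⇑ψ)
    (hψrange : Set.range ⇑ψ = {a : symSub n | (∫ x, qfun a x ∂σ) = 0})
    (hψisom : ∀ u v, (∫ x, qfun (ψ u) x * qfun (ψ v) x ∂σ) = ∑ i, u i * v i) :
    ∏ κ : Fin n ⊕ Up n, (wsc κ)⁻¹ ≤ d.factorial * (volume (⇑ψ ⁻¹' sect σ (NNQ n))).toReal := by
  have hcard : Fintype.card (Fin (d+1)) = Fintype.card (Fin n ⊕ Up n) := by
    rw [Fintype.card_sum, Fintype.card_fin, Fintype.card_fin]
    have := card_up n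
    nlinarith
  let e : Fin (d+1) ≃ (Fin n ⊕ Up n) := Fintype.equivOfCardEq hcard
  let F : (Fin (d+1) → ℝ) → symSub n := fun v => ψ (WithLp.toLp 2 fun i : Fin d => v i.succ) + v 0 • rQ n
  let L : (Fin (d+1) → ℝ) →ₗ[ℝ] (Fin (d+1) → ℝ) :=
    { toFun := fun v k => Asc (e k) * coef (e k) (F v)
      map_add' := by
        intro v w
        have : F (v + w) = F v + F w := by
          have h1 : (WithLp.toLp 2 fun i : Fin d => (v + w) i.succ)
            = (WithLp.toLp 2 fun i : Fin d => v i.succ) + (WithLp.toLp 2 fun i : Fin d => w i.succ) := rfl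
          simp only [F]
          rw [h1, map_add, Pi.add_apply, add_smul]
          abel
        ext k
        simp only [this, coef_add, Pi.add_apply]
        ring
      map_smul' := by
        intro t v
        have : F (t • v) = t • F v := by
          have h1 : (WithLp.toLp 2 fun i : Fin d => (t • v) i.succ)
            = t • (WithLp.toLp 2 fun i : Fin d => v i.succ) := rfl
          simp only [F]
          rw [h1, map_smul, Pi.smul_apply, smul_add, smul_eq_mul, mul_smul]
        ext k
        simp only [this, coef_smul, Pi.smul_apply, RingHom.id_apply, smul_eq_mul]
        ring }
  have hLk : ∀ v k, L v k = Asc (e k) * coef (e k) (F v) := fun v k => rfl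
  have hψ0 : ∀ u, ∫ x, qfun (ψ u) x ∂σ = 0 := by
    intro u
    have : ψ u ∈ Set.range ⇑ψ := ⟨u, rfl⟩
    rw [hψrange] at this
    exact this
  have hr1 : ∫ x, qfun (rQ n) x ∂σ = 1 := by
    have := G.rmul (fun _ => 1)
    rw [G.one] at this
    simpa using this
  have hmean : ∀ v, ∫ x, qfun (F v) x ∂σ = v 0 := by
    intro v
    simp only [F, qfun_add, qfun_smul]
    have c2 := qfun_cont (rQ n)
    rw [integral_add (G.int _ (qfun_cont _)) (G.int _ (by fun_prop)), integral_const_mul, hψ0, hr1]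
    ring
  have hL : ∀ v, ∑ k, wsc (e k) * L v k = v 0 := by
    intro v
    simp only [hLk]
    rw [e.sum_comp (fun κ => wsc κ * (Asc κ * coef κ (F v))), sum_coef_mean hn, ← G.mean hn, hmean]
  have hsq : ∀ v, ∫ x, qfun (F v) x * qfun (F v) x ∂σ = ∑ k, v k ^ 2 := by
    intro v
    set u : EuclideanSpace ℝ (Fin d) := WithLp.toLp 2 fun i : Fin d => v i.succ with hu
    have h1 : ∀ x, qfun (F v) x * qfun (F v) x = qfun (ψ u) x * qfun (ψ u) x
        + (2 * v 0) * (qfun (rQ n) x * qfun (ψ u) x) + (v 0)^2 * (qfun (rQ n) x * qfun (rQ n) x) := by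
      intro x
      simp only [F, qfun_add, qfun_smul]
      ring
    have c1 := qfun_cont (ψ u)
    have c2 := qfun_cont (rQ n)
    simp only [h1]
    rw [integral_add (G.int _ (by fun_prop)) (G.int _ (by fun_prop)),
      integral_add (G.int _ (by fun_prop)) (G.int _ (by fun_prop)), integral_const_mul, integral_const_mul,
      G.rmul, G.rmul, hψ0, hr1, hψisom, Fin.sum_univ_succ]
    simp only [hu]
    have : ∑ i : Fin d, v i.succ * v i.succ = ∑ i : Fin d, v i.succ ^ 2 := by
      refine sum_congr rfl fun i _ => ?_
      ring
    rw [this]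
    ring
  have hc : ∀ v, ∑ k, (L v k)^2 ≤ ∑ k, (v k)^2 := by
    intro v
    simp only [hLk]
    rw [e.sum_comp (fun κ => (Asc κ * coef κ (F v))^2), sum_coef_sq hn, ← hsq]
    exact G.L2 hn _
  have hinj : Function.Injective L := by
    rw [injective_iff_map_eq_zero]
    intro v hv
    have h0 : v 0 = 0 := by
      rw [← hL v, hv]; simp
    have hF : F v = 0 := by
      have h1 : ∀ κ, coef κ (F v) = 0 := by
        intro κ
        have := congrFun hv (e.symm κ)
        rw [hLk, e.apply_symm_apply] at this
        exact (mul_eq_zero.mp this).resolve_left (Asc_pos hn κ).ne'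
      rw [coef_forall (F v) (fun z => z = 0)] at h1
      ext i j
      exact h1 i j
    simp only [F, h0, zero_smul, add_zero] at hF
    have hu := hψinj (hF.trans (map_zero ψ).symm)
    ext k
    refine Fin.cases h0 (fun i => ?_) k
    exact congrArg (fun z : EuclideanSpace ℝ (Fin d) => z i) hu
  obtain ⟨h1, h2⟩ := simplex_vol d L hinj hc (fun k => wsc (e k)) (fun k => wsc_pos hn _) hL
  rw [e.prod_comp (fun κ => (wsc κ)⁻¹)] at h1
  have hLc : Continuous L := L.continuous_of_finiteDimensional
  have hm : ∀ t : ℝ, MeasurableSet {u : Fin d → ℝ | ∀ k, 0 < L (Fin.cons t u) k} := by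
    intro t
    rw [Set.ofPred_forall]
    refine MeasurableSet.iInter fun k => ?_
    refine (isOpen_lt continuous_const ?_).measurableSet
    exact (continuous_apply k).comp (hLc.comp (by fun_prop))
  have hmp := PiLp.volume_preserving_ofLp (Fin d)
  rw [← hmp.measure_preimage (hm _).nullMeasurableSet] at h1 h2
  have hFc : ∀ (t : ℝ) (u : EuclideanSpace ℝ (Fin d)), F (Fin.cons t u.ofLp) = ψ u + t • rQ n := by
    intro t u
    simp [F]
  refine h1.trans ?_
  gcongr ?_ * ?_
  refine ENNReal.toReal_mono ?_ (measure_mono ?_)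
  · refine ne_top_of_le_ne_top h2 (measure_mono ?_)
    intro u hu k
    have hu2 := hu.2
    rw [hLk, hFc, coef_add, coef_smul, coef_rQ]
    have := (coef_forall (ψ u + rQ n) (fun z => 0 ≤ z)).mpr hu2 (e k)
    rw [coef_add, coef_rQ] at this
    exact mul_pos (Asc_pos hn _) (by linarith)
  · intro u hu
    refine ⟨hψ0 u, ?_⟩
    refine (coef_forall (ψ u + rQ n) (fun z => 0 ≤ z)).mp fun κ => ?_
    have := hu (e.symm κ)
    rw [hLk, hFc, one_smul, e.apply_symm_apply] at this
    exact (pos_of_mul_pos_right this (Asc_pos hn κ).le).le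
end assembly

/-- For every `n ≥ 5`, `vrad(NN_Q~) ≥ 1/(√2 · n)`. -/
theorem stmt1 (n : ℕ) (hn : 5 ≤ n)
    (σ : Measure (EuclideanSpace ℝ (Fin n)))
    (hσprob : IsProbabilityMeasure σ)
    (hσsphere : σ (Metric.sphere (0 : EuclideanSpace ℝ (Fin n)) 1) = 1)
    (hσinv : ∀ O : EuclideanSpace ℝ (Fin n) ≃ₗᵢ[ℝ] EuclideanSpace ℝ (Fin n),
      Measure.map (⇑O) σ = σ)
    (ψ : EuclideanSpace ℝ (Fin (n*(n+1)/2 - 1)) →ₗ[ℝ] symSub n)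
    (hψinj : Function.Injective ⇑ψ)
    (hψrange : Set.range ⇑ψ = {a : symSub n | (∫ x, qfun a x ∂σ) = 0})
    (hψisom : ∀ u v, (∫ x, qfun (ψ u) x * qfun (ψ v) x ∂σ) = ∑ i, u i * v i) :
    1 / (Real.sqrt 2 * n) ≤ vrad ψ (sect σ (NNQ n)) := by

  have G := good hσprob hσsphere hσinv
  have hd : 2 * ((n*(n+1)/2 - 1) + 1) = n * (n+1) := by
    have h1 : 2 ∣ n * (n+1) := (Nat.even_mul_succ_self n).two_dvd
    have h2 : 30 ≤ n * (n+1) := by nlinarith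
    omega
  exact final_bound n _ hn hd _ _ ENNReal.toReal_nonneg
    (prod_nonneg fun κ _ => (inv_pos.mpr (wsc_pos hn κ)).le) (prod_wsc hn _ hd)
    (assemble _ hn hd G ψ hψinj hψrange hψisom)
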